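/- There is a universal constant C such that the following holds. Fix a symmetric matrix A ∈ ℝ^{n×n}, δ ∈ (0,1), and 0 < Δ ≤ ‖A‖_2. Let D ∈ ℝ^{n×n} be a random diagonal matrix whose diagonal entries are drawn independently and uniformly from [−Δ, Δ], and let Ã = A + D with eigenvalues λ_1(Ã) ≥ … ≥ λ_n(Ã). Then, with probability at least 1 − δ, min_{i∈{1,…,n−1}} |λ_i(Ã) − λ_{i+1}(Ã)| / |λ_{i+1}(Ã)| ≥ (δ/(C n²))·(Δ²/‖A‖_2²). -/

import Mathlib

open MeasureTheory ProbabilityTheory Matrix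

noncomputable section

/-- Euclidean (ℓ₂) norm of a vector. -/
def l2norm {n : ℕ} (v : Fin n → ℝ) : ℝ := Real.sqrt (∑ i, v i ^ 2)

/-- Spectral (ℓ₂ operator) norm of a matrix. -/
def specNorm {n d : ℕ} (M : Matrix (Fin n) (Fin d) ℝ) : ℝ :=
  sSup {c : ℝ | ∃ v : Fin d → ℝ, l2norm v ≤ 1 ∧ c = l2norm (M.mulVec v)}

/-- Frobenius norm of a matrix. -/
def frobNorm {n d : ℕ} (M : Matrix (Fin n) (Fin d) ℝ) : ℝ :=
  Real.sqrt (∑ i, ∑ j, M i j ^ 2)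

/-- Column span of a matrix. -/
def colSpan {n : ℕ} {m : Type*} (M : Matrix (Fin n) m ℝ) : Submodule ℝ (Fin n → ℝ) :=
  Submodule.span ℝ (Set.range fun j i => M i j)

/-- `IsSVD A U V σ` : `A = U Σ Vᵀ` is a singular value decomposition of `A`, where
`σ 0 ≥ σ 1 ≥ … ≥ 0` are the singular values (0-indexed, `σ i = 0` for `i ≥ min n d`). -/
def IsSVD {n d : ℕ} (A : Matrix (Fin n) (Fin d) ℝ) (U : Matrix (Fin n) (Fin n) ℝ)
    (V : Matrix (Fin d) (Fin d) ℝ) (σ : ℕ → ℝ) : Prop :=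
  Uᵀ * U = 1 ∧ Vᵀ * V = 1 ∧
  (∀ i j : ℕ, i ≤ j → σ j ≤ σ i) ∧ (∀ i, 0 ≤ σ i) ∧
  (∀ i, min n d ≤ i → σ i = 0) ∧
  A = U * (Matrix.of fun (i : Fin n) (j : Fin d) => if (i : ℕ) = (j : ℕ) then σ (i : ℕ) else 0) * Vᵀ

/-- The first `k` columns of a square matrix `U` (e.g. the top-`k` left singular vectors). -/
def topCols {n k : ℕ} (U : Matrix (Fin n) (Fin n) ℝ) (hk : k ≤ n) :
    Matrix (Fin n) (Fin k) ℝ :=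
  Matrix.of fun i j => U i (Fin.castLE hk j)

/-- The best rank-`k` approximation `A_k = U_k U_kᵀ A` of `A`. -/
def rankApprox {n d : ℕ} (k : ℕ) (A : Matrix (Fin n) (Fin d) ℝ)
    (U : Matrix (Fin n) (Fin n) ℝ) (hk : k ≤ n) : Matrix (Fin n) (Fin d) ℝ :=
  topCols U hk * (topCols U hk)ᵀ * A

/-- The law of a vector in `ℝⁿ` with i.i.d. standard Gaussian entries. -/
def stdGaussian (n : ℕ) : Measure (Fin n → ℝ) :=
  Measure.pi fun _ => gaussianReal 0 1

/-- The law of an `n × b` matrix with i.i.d. standard Gaussian entries. -/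
def stdGaussianMat (n b : ℕ) : Measure (Fin n → Fin b → ℝ) :=
  Measure.pi fun _ => Measure.pi fun _ => gaussianReal 0 1

/-- `U'` consists of `k` top (unit-norm, mutually orthogonal) eigenvectors of the symmetric
matrix `M`: the first `k` columns of an orthogonal eigenbasis whose eigenvalues are sorted
in decreasing order. -/
def IsTopEigenvectors {m k : ℕ} (M : Matrix (Fin m) (Fin m) ℝ)
    (U' : Matrix (Fin m) (Fin k) ℝ) : Prop :=
  ∃ (W : Matrix (Fin m) (Fin m) ℝ) (μ : Fin m → ℝ) (hk : k ≤ m),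
    Wᵀ * W = 1 ∧ (∀ i j : Fin m, i ≤ j → μ j ≤ μ i) ∧
    M = W * Matrix.diagonal μ * Wᵀ ∧
    U' = Matrix.of fun i j => W i (Fin.castLE hk j)

/-- `Q` is a possible output of the single vector Krylov method (Algorithm 1) on `A` with
target rank `k`, starting vector `x` and `t` iterations. -/
def IsKrylovOutput {n d k : ℕ} (A : Matrix (Fin n) (Fin d) ℝ) (t : ℕ)
    (x : Fin n → ℝ) (Q : Matrix (Fin n) (Fin k) ℝ) : Prop :=
  ∃ (m : ℕ) (Z : Matrix (Fin n) (Fin m) ℝ) (U' : Matrix (Fin m) (Fin k) ℝ),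
    Zᵀ * Z = 1 ∧
    colSpan Z = Submodule.span ℝ
      {v : Fin n → ℝ | ∃ j ≤ t, v = ((A * Aᵀ) ^ j).mulVec x} ∧
    IsTopEigenvectors (Zᵀ * (A * Aᵀ) * Z) U' ∧
    Q = Z * U'

/-- `Q` is a possible output of the block Krylov method (Algorithm 2) on `A` with
target rank `k`, starting block `B` and `t` iterations. -/
def IsBlockKrylovOutput {n d k b : ℕ} (A : Matrix (Fin n) (Fin d) ℝ) (t : ℕ)
    (B : Matrix (Fin n) (Fin b) ℝ) (Q : Matrix (Fin n) (Fin k) ℝ) : Prop :=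
  ∃ (m : ℕ) (Z : Matrix (Fin n) (Fin m) ℝ) (U' : Matrix (Fin m) (Fin k) ℝ),
    Zᵀ * Z = 1 ∧
    colSpan Z = Submodule.span ℝ
      {v : Fin n → ℝ | ∃ j ≤ t, ∃ c : Fin b, v = ((A * Aᵀ) ^ j).mulVec (fun i => B i c)} ∧
    IsTopEigenvectors (Zᵀ * (A * Aᵀ) * Z) U' ∧
    Q = Z * U'

/-- `Q` is a possible output of single vector simultaneous iteration on `A` with
target rank `k`, starting vector `x`, `t` iterations, and memory budget `ℓ`. -/
def IsSimIterOutput {n d k : ℕ} (A : Matrix (Fin n) (Fin d) ℝ) (t ℓ : ℕ)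
    (x : Fin n → ℝ) (Q : Matrix (Fin n) (Fin k) ℝ) : Prop :=
  ∃ (m : ℕ) (Z : Matrix (Fin n) (Fin m) ℝ) (U' : Matrix (Fin m) (Fin k) ℝ),
    Zᵀ * Z = 1 ∧
    colSpan Z = Submodule.span ℝ
      {v : Fin n → ℝ | ∃ j, t - ℓ + 1 ≤ j ∧ j ≤ t ∧ v = ((A * Aᵀ) ^ j).mulVec x} ∧
    IsTopEigenvectors (Zᵀ * (A * Aᵀ) * Z) U' ∧
    Q = Z * U'

/-- `B` is a `(k,L)`-good starting matrix for a matrix with top-`k` left singular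
vectors `Uk` (Definition 2.1 / `def:lgood`). -/
def IsGoodStart {n k : ℕ} (Uk : Matrix (Fin n) (Fin k) ℝ)
    (B : Matrix (Fin n) (Fin k) ℝ) (L : ℝ) : Prop :=
  ∃ Q : Matrix (Fin n) (Fin k) ℝ, Qᵀ * Q = 1 ∧ colSpan Q = colSpan B ∧
    IsUnit (Ukᵀ * Q) ∧ specNorm ((Ukᵀ * Q)⁻¹) ^ 2 ≤ L

/-- Generalized `(k,L)`-good starting matrix (Definition `def:lgood-small-block`):
`B` may have any number of columns; some orthonormal `Q` with columns inside the column
span of `B` has `UkᵀQ` invertible with `‖(UkᵀQ)⁻¹‖₂² ≤ L`. -/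
def IsGoodStartGen {n k : ℕ} {m : Type*} [Fintype m] (Uk : Matrix (Fin n) (Fin k) ℝ)
    (B : Matrix (Fin n) m ℝ) (L : ℝ) : Prop :=
  ∃ Q : Matrix (Fin n) (Fin k) ℝ, Qᵀ * Q = 1 ∧
    (∀ j : Fin k, (fun i => Q i j) ∈ colSpan B) ∧
    IsUnit (Ukᵀ * Q) ∧ specNorm ((Ukᵀ * Q)⁻¹) ^ 2 ≤ L

/-- Schatten `p`-norm of a matrix: `(∑ i σ_i(M)^p)^(1/p)`, where the singular values are
the square roots of the eigenvalues of `M Mᵀ`. -/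
def schattenNorm {n d : ℕ} (M : Matrix (Fin n) (Fin d) ℝ) (p : ℝ) : ℝ :=
  (∑ i, Real.sqrt ((Matrix.isHermitian_mul_conjTranspose_self M).eigenvalues i) ^ p) ^ (1 / p)

/-!
Write `G = (A + D - z)⁻¹` with `Im z > 0`. As a function of the single random entry `D j`, the
diagonal entry `G j j` is a Möbius transform `1 / (w + D j)`, so the integral of its imaginary part
over `D j` is a Cauchy integral, equal to `π` whatever the other entries are. An eigenvalue within
`ε` of `E` forces `ε * Im (tr G) ≥ 1 / 4` at `z = E + iε`, hence by Markov's inequality has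
probability `O(nε/Δ)` (Wegner's estimate). If two eigenvalues lie within `ε` of `E`, some
combination of their eigenvectors vanishes at `j`, so the trace bound survives an arbitrary change
of `D j`. Averaging one trace over `D j` and then the weight `Im (G j j)` over the same coordinate
gives probability `O((nε/Δ)²)` (Minami's estimate). All eigenvalues lie in `[-2‖A‖, 2‖A‖]`, and a
union bound over the `O(‖A‖/ε)` points of a grid shows that two eigenvalues are within `ε` of each
other with probability `O(n²ε‖A‖/Δ²)`.
-/

open scoped ENNReal

variable {ι : Type*}

lemma isHermitian_map_ofReal {M : Matrix ι ι ℝ} (hM : M.IsSymm) :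
    (M.map Complex.ofReal).IsHermitian := by
  ext i j
  simp [hM.apply]

variable [DecidableEq ι]

/-- The Hamiltonian `A + diag D`: the matrix `A` with the real potential `D` added on its
diagonal. -/
def addDiagonal (A : Matrix ι ι ℂ) (D : ι → ℝ) : Matrix ι ι ℂ :=
  A + diagonal fun i => (D i : ℂ)

lemma isHermitian_addDiagonal {A : Matrix ι ι ℂ} (hA : A.IsHermitian) (D : ι → ℝ) :
    (addDiagonal A D).IsHermitian :=
  hA.add <| isHermitian_diagonal_of_self_adjoint _ <| by ext i; simp

lemma addDiagonal_update (A : Matrix ι ι ℂ) (D : ι → ℝ) (j : ι) (t : ℝ) :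
    addDiagonal A (Function.update D j t) =
      addDiagonal A (Function.update D j 0) + single j j (t : ℂ) := by
  have hdiag : diagonal (fun i => (Function.update D j t i : ℂ)) =
      diagonal (fun i => (Function.update D j 0 i : ℂ)) + single j j (t : ℂ) := by
    rw [← diagonal_single, diagonal_add]
    congr 1
    ext i
    rcases eq_or_ne i j with rfl | hi <;> simp [*]
  rw [addDiagonal, addDiagonal, hdiag, add_assoc]

lemma addDiagonal_map_ofReal (M : Matrix ι ι ℝ) (D : ι → ℝ) :
    addDiagonal (M.map Complex.ofReal) D = (M + diagonal D).map Complex.ofReal := by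
  ext i j
  simp [addDiagonal, diagonal_apply, apply_ite Complex.ofReal]

variable [Fintype ι]

lemma inv_add_single_apply_self {𝕜 : Type*} [Field 𝕜] {M : Matrix ι ι 𝕜} {j : ι}
    (hj : M⁻¹ j j ≠ 0) (t : 𝕜) : (M + single j j t)⁻¹ j j = ((M⁻¹ j j)⁻¹ + t)⁻¹ := by
  have hrow : M + single j j t = M.updateRow j (M j + t • Pi.single j 1) := by
    ext a b
    rcases eq_or_ne a j with rfl | ha
    · simp [single_apply, Pi.single_apply, eq_comm]
    · simp [updateRow_ne ha, ha.symm]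
  have hdet : (M + single j j t).det = M.det + t * M.adjugate j j := by
    rw [hrow, det_updateRow_add, det_updateRow_smul, updateRow_eq_self, adjugate_apply]
  have hadj : (M + single j j t).adjugate j j = M.adjugate j j := by
    rw [hrow, adjugate_apply, adjugate_apply, updateRow_idem]
  simp only [inv_def, Ring.inverse_eq_inv', Matrix.smul_apply, smul_eq_mul, hdet, hadj] at hj ⊢
  have hadj_ne : M.adjugate j j ≠ 0 := right_ne_zero_of_mul hj
  field_simp

lemma lintegral_im_inv_add_ofReal {w : ℂ} (hw : w.im < 0) :
    ∫⁻ t : ℝ, ENNReal.ofReal ((w + t)⁻¹).im = ENNReal.ofReal Real.pi := by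
  lift -w.im to NNReal using (neg_pos.2 hw).le with γ hγ
  have hγ0 : γ ≠ 0 := by
    rintro rfl
    rw [NNReal.coe_zero] at hγ
    linarith
  have hpdf (t : ℝ) : ENNReal.ofReal ((w + t)⁻¹).im =
      ENNReal.ofReal Real.pi * cauchyPDF (-w.re) γ t := by
    rw [cauchyPDF_def, ← ENNReal.ofReal_mul Real.pi_nonneg, cauchyPDFReal_def, hγ, Complex.inv_im,
      Complex.normSq_apply]
    congr 1
    simp only [Complex.add_re, Complex.add_im, Complex.ofReal_re, Complex.ofReal_im]
    field_simp
    ring_nf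
  simp_rw [hpdf]
  rw [lintegral_const_mul _ (by fun_prop), lintegral_cauchyPDF_eq_one _ hγ0, mul_one]

/-- The resolvent `(H - z)⁻¹`. The sign is opposite to that of `resolvent`, so that for Hermitian
`H` the diagonal entries have positive imaginary part when `z` does. -/
def greenFunction (H : Matrix ι ι ℂ) (z : ℂ) : Matrix ι ι ℂ := (H - z • 1)⁻¹

open scoped Matrix.Norms.L2Operator in
lemma isUnit_sub_smul_one {H : Matrix ι ι ℂ} (hH : H.IsHermitian) {z : ℂ} (hz : z.im ≠ 0) :
    IsUnit (H - z • 1) := by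
  have hz' : z ∉ spectrum ℂ H := fun h =>
    hz (by rw [hH.isSelfAdjoint.mem_spectrum_eq_re h, Complex.ofReal_im])
  rwa [spectrum.notMem_iff, Algebra.algebraMap_eq_smul_one, IsUnit.sub_iff] at hz'

lemma sub_smul_one_mul_greenFunction {H : Matrix ι ι ℂ} (hH : H.IsHermitian) {z : ℂ}
    (hz : z.im ≠ 0) : (H - z • 1) * greenFunction H z = 1 :=
  mul_nonsing_inv _ ((isUnit_iff_isUnit_det _).1 (isUnit_sub_smul_one hH hz))

lemma im_greenFunction_apply_self {H : Matrix ι ι ℂ} (hH : H.IsHermitian) {z : ℂ}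
    (hz : z.im ≠ 0) (j : ι) :
    (greenFunction H z j j).im = z.im * ∑ i, ‖greenFunction H z i j‖ ^ 2 := by
  set G := greenFunction H z
  have hinv : (H - z • 1) * G = 1 := sub_smul_one_mul_greenFunction hH hz
  have hinv' : Gᴴ * (H - star z • 1) = 1 := by
    simpa [conjTranspose_mul, hH.eq] using congrArg conjTranspose hinv
  have hresolvent : G - Gᴴ = (z - star z) • (Gᴴ * G) := by
    calc G - Gᴴ = Gᴴ * (H - star z • 1) * G - Gᴴ * ((H - z • 1) * G) := by
          rw [hinv, hinv', Matrix.one_mul, Matrix.mul_one]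
      _ = (z - star z) • (Gᴴ * G) := by
          simp only [Matrix.mul_sub, Matrix.sub_mul, Matrix.mul_smul, Matrix.smul_mul,
            Matrix.mul_one, Matrix.one_mul, Matrix.mul_assoc, sub_smul]
          abel
  have hsq : (Gᴴ * G) j j = ((∑ i, ‖G i j‖ ^ 2 : ℝ) : ℂ) := by
    simp [Matrix.mul_apply, Complex.conj_mul']
  have him := congrArg Complex.im (congrFun (congrFun hresolvent j) j)
  simp only [Matrix.sub_apply, conjTranspose_apply, Matrix.smul_apply, hsq, smul_eq_mul,
    Complex.sub_im, Complex.star_def, Complex.conj_im, Complex.im_mul_ofReal] at him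
  linarith

lemma im_greenFunction_apply_self_pos {H : Matrix ι ι ℂ} (hH : H.IsHermitian) {z : ℂ}
    (hz : 0 < z.im) (j : ι) : 0 < (greenFunction H z j j).im := by
  rw [im_greenFunction_apply_self hH hz.ne']
  refine mul_pos hz ((Finset.sum_nonneg fun i _ => by positivity).lt_of_ne' fun hsum => ?_)
  have hcol (i : ι) : greenFunction H z i j = 0 := by
    simpa using (Finset.sum_eq_zero_iff_of_nonneg fun i _ => by positivity).1 hsum i
  simpa [Matrix.mul_apply, hcol] using
    congrFun (congrFun (sub_smul_one_mul_greenFunction hH hz.ne') j) j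

lemma norm_sq_toEuclideanLin_le {𝕜 m n : Type*} [RCLike 𝕜] [Fintype m] [Fintype n]
    [DecidableEq n] (M : Matrix m n 𝕜) (v : EuclideanSpace 𝕜 n) :
    ‖toEuclideanLin M v‖ ^ 2 ≤ (∑ i, ∑ j, ‖M i j‖ ^ 2) * ‖v‖ ^ 2 := by
  rw [EuclideanSpace.norm_sq_eq, EuclideanSpace.norm_sq_eq, Finset.sum_mul]
  refine Finset.sum_le_sum fun i _ => ?_
  calc ‖toEuclideanLin M v i‖ ^ 2 ≤ (∑ j, ‖M i j‖ * ‖v j‖) ^ 2 := by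
        gcongr
        simp only [← norm_mul]
        exact norm_sum_le Finset.univ fun j => M i j * v j
    _ ≤ (∑ j, ‖M i j‖ ^ 2) * ∑ j, ‖v j‖ ^ 2 := Finset.sum_mul_sq_le_sq_mul_sq _ _ _

lemma im_le_sq_mul_im_trace_greenFunction {H : Matrix ι ι ℂ} (hH : H.IsHermitian) {z : ℂ}
    (hz : 0 < z.im) {v : EuclideanSpace ℂ ι} (hv : v ≠ 0) {r : ℝ}
    (h : ‖toEuclideanLin H v - z • v‖ ≤ r * ‖v‖) :
    z.im ≤ r ^ 2 * (greenFunction H z).trace.im := by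
  set G := greenFunction H z
  have hGv : toEuclideanLin G (toEuclideanLin H v - z • v) = v := by
    have hinv : G * (H - z • 1) = 1 :=
      mul_eq_one_comm.1 (sub_smul_one_mul_greenFunction hH hz.ne')
    have hsub : toEuclideanLin H v - z • v = toEuclideanLin (H - z • 1) v := by
      simp [toLpLin_one]
    rw [hsub, toLpLin_apply, toLpLin_apply, mulVec_mulVec, hinv, one_mulVec]
  have hnorm : 1 * ‖v‖ ^ 2 ≤ (∑ i, ∑ j, ‖G i j‖ ^ 2) * r ^ 2 * ‖v‖ ^ 2 := by
    calc 1 * ‖v‖ ^ 2 = ‖toEuclideanLin G (toEuclideanLin H v - z • v)‖ ^ 2 := by rw [hGv, one_mul]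
      _ ≤ (∑ i, ∑ j, ‖G i j‖ ^ 2) * ‖toEuclideanLin H v - z • v‖ ^ 2 :=
          norm_sq_toEuclideanLin_le _ _
      _ ≤ (∑ i, ∑ j, ‖G i j‖ ^ 2) * (r * ‖v‖) ^ 2 := by gcongr
      _ = _ := by ring
  have htrace : G.trace.im = z.im * ∑ i, ∑ j, ‖G i j‖ ^ 2 := by
    rw [Finset.sum_comm, Finset.mul_sum, trace, Complex.im_sum]
    exact Finset.sum_congr rfl fun j _ => im_greenFunction_apply_self hH hz.ne' j
  have hF := le_of_mul_le_mul_right hnorm (by positivity)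
  calc z.im = z.im * 1 := (mul_one _).symm
    _ ≤ z.im * ((∑ i, ∑ j, ‖G i j‖ ^ 2) * r ^ 2) := by gcongr
    _ = r ^ 2 * G.trace.im := by rw [htrace]; ring

lemma lintegral_im_greenFunction_add_single {H : Matrix ι ι ℂ} (hH : H.IsHermitian) {z : ℂ}
    (hz : 0 < z.im) (j : ι) :
    ∫⁻ t : ℝ, ENNReal.ofReal (greenFunction (H + single j j (t : ℂ)) z j j).im =
      ENNReal.ofReal Real.pi := by
  have him : 0 < (greenFunction H z j j).im := im_greenFunction_apply_self_pos hH hz j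
  have hne : greenFunction H z j j ≠ 0 := by
    intro h
    simp [h] at him
  have hadd (t : ℝ) : greenFunction (H + single j j (t : ℂ)) z j j =
      ((greenFunction H z j j)⁻¹ + t)⁻¹ := by
    rw [greenFunction, add_sub_right_comm]
    exact inv_add_single_apply_self hne _
  simp_rw [hadd]
  refine lintegral_im_inv_add_ofReal ?_
  rw [Complex.inv_im]
  exact div_neg_of_neg_of_pos (neg_neg_of_pos him) (Complex.normSq_pos.2 hne)

lemma toEuclideanLin_addDiagonal_update (A : Matrix ι ι ℂ) (D : ι → ℝ) {j : ι} (t : ℝ)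
    {v : EuclideanSpace ℂ ι} (hv : v j = 0) :
    toEuclideanLin (addDiagonal A (Function.update D j t)) v =
      toEuclideanLin (addDiagonal A D) v := by
  have hzero (s : ℝ) : toEuclideanLin (addDiagonal A (Function.update D j s)) v =
      toEuclideanLin (addDiagonal A (Function.update D j 0)) v := by
    rw [addDiagonal_update, map_add, LinearMap.add_apply, add_eq_left]
    ext i
    simp [toLpLin_apply, single_mulVec, hv]
  rw [hzero t, ← hzero (D j), Function.update_eq_self]

lemma measurable_greenFunction_addDiagonal (A : Matrix ι ι ℂ) (z : ℂ) (i j : ι) :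
    Measurable fun D : ι → ℝ => greenFunction (addDiagonal A D) z i j := by
  have hH : Continuous fun D : ι → ℝ => addDiagonal A D - z • (1 : Matrix ι ι ℂ) := by
    unfold addDiagonal
    fun_prop
  have hdet := hH.matrix_det.measurable
  have hadj := (hH.matrix_adjugate.matrix_elem i j).measurable
  simp_rw [greenFunction, inv_def, Ring.inverse_eq_inv', Matrix.smul_apply, smul_eq_mul]
  fun_prop

lemma measurable_ofReal_im_greenFunction_addDiagonal (A : Matrix ι ι ℂ) (E ε : ℝ) (j : ι) :
    Measurable fun D : ι → ℝ => ENNReal.ofReal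
      (4 * ε * (greenFunction (addDiagonal A D) (E + ε * Complex.I) j j).im) :=
  ((Complex.measurable_im.comp
    (measurable_greenFunction_addDiagonal A _ j j)).const_mul _).ennreal_ofReal

/-- `v` is an approximate eigenvector of `H` at energy `E`, with relative error `ε`. -/
def IsQuasimode (H : Matrix ι ι ℂ) (E ε : ℝ) (v : EuclideanSpace ℂ ι) : Prop :=
  v ≠ 0 ∧ ‖toEuclideanLin H v - (E : ℂ) • v‖ ≤ ε * ‖v‖

lemma IsQuasimode.one_le_sum_im_greenFunction {H : Matrix ι ι ℂ} (hH : H.IsHermitian) {E ε : ℝ}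
    (hε : 0 < ε) {v : EuclideanSpace ℂ ι} (hv : IsQuasimode H E ε v) :
    1 ≤ ∑ j, ENNReal.ofReal (4 * ε * (greenFunction H (E + ε * Complex.I) j j).im) := by
  set z : ℂ := E + ε * Complex.I with hz
  have hzim : z.im = ε := by simp [hz]
  have hshift : ‖toEuclideanLin H v - z • v‖ ≤ 2 * ε * ‖v‖ :=
    calc ‖toEuclideanLin H v - z • v‖
        = ‖(toEuclideanLin H v - (E : ℂ) • v) - ((ε : ℂ) * Complex.I) • v‖ := by
          rw [hz, add_smul, sub_sub]
      _ ≤ ‖toEuclideanLin H v - (E : ℂ) • v‖ + ‖((ε : ℂ) * Complex.I) • v‖ := norm_sub_le _ _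
      _ ≤ ε * ‖v‖ + ε * ‖v‖ := by
          refine add_le_add hv.2 ?_
          simp [norm_smul, abs_of_pos hε]
      _ = 2 * ε * ‖v‖ := by ring
  have htrace := im_le_sq_mul_im_trace_greenFunction hH (hzim ▸ hε) hv.1 hshift
  have hpos (j : ι) : 0 ≤ 4 * ε * (greenFunction H z j j).im :=
    mul_nonneg (by positivity) (im_greenFunction_apply_self_pos hH (hzim ▸ hε) j).le
  rw [← ENNReal.ofReal_sum_of_nonneg fun j _ => hpos j, ENNReal.one_le_ofReal, ← Finset.mul_sum]
  rw [hzim, trace, Complex.im_sum] at htrace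
  refine le_of_mul_le_mul_left ?_ hε
  calc ε * 1 ≤ (2 * ε) ^ 2 * ∑ j, (greenFunction H z j j).im := by simpa using htrace
    _ = ε * (4 * ε * ∑ j, (greenFunction H z j j).im) := by ring

variable {A : Matrix ι ι ℂ}

lemma lintegral_im_greenFunction_addDiagonal_update_le (hA : A.IsHermitian) (E : ℝ) {ε : ℝ}
    (hε : 0 < ε) {μ : Measure ℝ} {ρ : ℝ≥0∞} (hμ : μ ≤ ρ • volume) (j : ι) (D : ι → ℝ) :
    ∫⁻ t, ENNReal.ofReal (4 * ε * (greenFunction (addDiagonal A (Function.update D j t))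
      (E + ε * Complex.I) j j).im) ∂μ ≤ ENNReal.ofReal (4 * Real.pi * ε) * ρ := by
  have hz : 0 < ((E : ℂ) + ε * Complex.I).im := by simpa using hε
  have hH := isHermitian_addDiagonal hA (Function.update D j 0)
  have hsplit (t : ℝ) : ENNReal.ofReal (4 * ε *
      (greenFunction (addDiagonal A (Function.update D j t)) (E + ε * Complex.I) j j).im) =
        ENNReal.ofReal (4 * ε) * ENNReal.ofReal (greenFunction
          (addDiagonal A (Function.update D j 0) + single j j (t : ℂ))
          (E + ε * Complex.I) j j).im := by
    rw [addDiagonal_update, ENNReal.ofReal_mul (by positivity)]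
  refine (lintegral_mono' hμ le_rfl).trans_eq ?_
  rw [lintegral_congr hsplit, lintegral_smul_measure,
    lintegral_const_mul' _ _ ENNReal.ofReal_ne_top, lintegral_im_greenFunction_add_single hH hz,
    ← ENNReal.ofReal_mul (by positivity), smul_eq_mul, mul_comm]
  ring_nf

section ResampledSums

variable {X : ι → Type*} [∀ i, MeasurableSpace (X i)] {ν : ∀ i, Measure (X i)}
  [∀ i, IsProbabilityMeasure (ν i)] {c : ℝ≥0∞}

lemma lintegral_lmarginal_singleton (j : ι) {g : (∀ i, X i) → ℝ≥0∞} (hg : Measurable g) :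
    ∫⁻ D, lmarginal ν {j} g D ∂Measure.pi ν = ∫⁻ D, g D ∂Measure.pi ν := by
  refine lintegral_eq_of_lmarginal_eq {j} (hg.lmarginal _) hg (funext fun D => ?_)
  rw [lmarginal_singleton]
  simp only [lmarginal_update_of_mem _ (Finset.mem_singleton_self j), lintegral_const,
    measure_univ, mul_one]

lemma lintegral_pi_mul_le {j : ι} {f h : (∀ i, X i) → ℝ≥0∞} (hf : Measurable f)
    (hfc : ∀ D, ∫⁻ t, f (Function.update D j t) ∂ν j ≤ c) (hh : Measurable h)
    (hhj : ∀ D t, h (Function.update D j t) = h D) :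
    ∫⁻ D, f D * h D ∂Measure.pi ν ≤ c * ∫⁻ D, h D ∂Measure.pi ν := by
  rw [← lintegral_const_mul _ hh]
  refine lintegral_le_of_lmarginal_le {j} (hf.mul hh) (hh.const_mul _) fun D => ?_
  simp only [lmarginal_singleton, hhj]
  have hfD : Measurable fun t => f (Function.update D j t) := hf.comp (measurable_update D)
  rw [lintegral_mul_const _ hfD, lintegral_const, measure_univ, mul_one]
  gcongr
  exact hfc D

variable {f : ι → (∀ i, X i) → ℝ≥0∞} {S : Set (∀ i, X i)}

lemma lintegral_pi_sum_le (hf : ∀ j, Measurable (f j))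
    (hfc : ∀ j D, ∫⁻ t, f j (Function.update D j t) ∂ν j ≤ c) :
    ∫⁻ D, ∑ j, f j D ∂Measure.pi ν ≤ Fintype.card ι * c := by
  rw [lintegral_finsetSum _ fun j _ => hf j, ← nsmul_eq_mul]
  refine Finset.sum_le_card_nsmul _ _ _ fun j _ => ?_
  simpa using lintegral_pi_mul_le (hf j) (hfc j) measurable_const (fun _ _ => rfl) (h := 1)

lemma measure_pi_le_of_one_le_sum (hf : ∀ j, Measurable (f j))
    (hfc : ∀ j D, ∫⁻ t, f j (Function.update D j t) ∂ν j ≤ c) (hS : ∀ D ∈ S, 1 ≤ ∑ j, f j D) :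
    Measure.pi ν S ≤ Fintype.card ι * c :=
  calc Measure.pi ν S ≤ 1 * Measure.pi ν {D | 1 ≤ ∑ j, f j D} := by
        rw [one_mul]
        exact measure_mono hS
    _ ≤ ∫⁻ D, ∑ j, f j D ∂Measure.pi ν :=
        mul_meas_ge_le_lintegral (Finset.measurable_fun_sum _ fun j _ => hf j) 1
    _ ≤ Fintype.card ι * c := lintegral_pi_sum_le hf hfc

-- The average `L j` of the sum over the `j`-th coordinate does not depend on that coordinate and
-- is at least `1` on `S`, so `S` lies in `{D | 1 ≤ ∑ j, f j D * L j D}`.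
lemma measure_pi_le_sq_of_one_le_sum_update [Nonempty ι] (hf : ∀ j, Measurable (f j))
    (hfc : ∀ j D, ∫⁻ t, f j (Function.update D j t) ∂ν j ≤ c)
    (hS : ∀ D ∈ S, ∀ j t, 1 ≤ ∑ k, f k (Function.update D j t)) :
    Measure.pi ν S ≤ (Fintype.card ι * c) ^ 2 := by
  have hsum : Measurable fun D => ∑ k, f k D := Finset.measurable_fun_sum _ fun k _ => hf k
  let L (j : ι) : (∀ i, X i) → ℝ≥0∞ := lmarginal ν {j} fun D => ∑ k, f k D
  have hL (j : ι) : Measurable (L j) := hsum.lmarginal _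
  have hLj (j : ι) (D : ∀ i, X i) (t : X j) : L j (Function.update D j t) = L j D :=
    lmarginal_update_of_mem _ (Finset.mem_singleton_self j) _ _ _
  have hone {D : ∀ i, X i} (hD : D ∈ S) : 1 ≤ ∑ j, f j D * L j D := by
    have hLD (j : ι) : 1 ≤ L j D := by
      simp only [L, lmarginal_singleton]
      simpa using lintegral_mono (μ := ν j) (hS D hD j)
    obtain ⟨j⟩ := ‹Nonempty ι›
    calc 1 ≤ ∑ k, f k D := by simpa using hS D hD j (D j)
      _ ≤ ∑ k, f k D * L k D := Finset.sum_le_sum fun k _ => le_mul_of_one_le_right' (hLD k)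
  calc Measure.pi ν S ≤ 1 * Measure.pi ν {D | 1 ≤ ∑ j, f j D * L j D} := by
        rw [one_mul]
        exact measure_mono fun D => hone
    _ ≤ ∫⁻ D, ∑ j, f j D * L j D ∂Measure.pi ν :=
        mul_meas_ge_le_lintegral (Finset.measurable_fun_sum _ fun j _ => (hf j).mul (hL j)) 1
    _ = ∑ j, ∫⁻ D, f j D * L j D ∂Measure.pi ν :=
        lintegral_finsetSum _ fun j _ => (hf j).mul (hL j)
    _ ≤ Fintype.card ι • (c * (Fintype.card ι * c)) :=
        Finset.sum_le_card_nsmul _ _ _ fun j _ =>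
          (lintegral_pi_mul_le (hf j) (hfc j) (hL j) (hLj j)).trans <| by
            rw [lintegral_lmarginal_singleton j hsum]
            gcongr
            exact lintegral_pi_sum_le hf hfc
    _ = (Fintype.card ι * c) ^ 2 := by rw [nsmul_eq_mul]; ring

end ResampledSums

section LevelStatistics

variable {ν : ι → Measure ℝ} [∀ i, IsProbabilityMeasure (ν i)] {ρ : ℝ≥0∞}

lemma measure_exists_isQuasimode_le (hA : A.IsHermitian) (hν : ∀ i, ν i ≤ ρ • volume) (E : ℝ)
    {ε : ℝ} (hε : 0 < ε) :
    Measure.pi ν {D | ∃ v, IsQuasimode (addDiagonal A D) E ε v} ≤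
      Fintype.card ι * (ENNReal.ofReal (4 * Real.pi * ε) * ρ) :=
  measure_pi_le_of_one_le_sum (measurable_ofReal_im_greenFunction_addDiagonal A E ε)
    (fun j D => lintegral_im_greenFunction_addDiagonal_update_le hA E hε (hν j) j D)
    fun D ⟨_, hv⟩ => hv.one_le_sum_im_greenFunction (isHermitian_addDiagonal hA D) hε

lemma ae_not_hasEigenvalue_addDiagonal (hA : A.IsHermitian) (hρ : ρ ≠ ∞)
    (hν : ∀ i, ν i ≤ ρ • volume) (E : ℝ) :
    ∀ᵐ D ∂Measure.pi ν, ¬Module.End.HasEigenvalue (toEuclideanLin (addDiagonal A D)) (E : ℂ) := by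
  have hlim : Filter.Tendsto (fun ε => Fintype.card ι * (ENNReal.ofReal (4 * Real.pi * ε) * ρ))
      (nhdsWithin 0 (Set.Ioi 0)) (nhds 0) := by
    have hcont : Continuous fun ε : ℝ => Fintype.card ι * (ENNReal.ofReal (4 * Real.pi * ε) * ρ) :=
      (ENNReal.continuous_const_mul (ENNReal.natCast_ne_top _)).comp <|
        (ENNReal.continuous_mul_const hρ).comp <| ENNReal.continuous_ofReal.comp <|
          continuous_const_mul _
    simpa using (hcont.tendsto 0).mono_left nhdsWithin_le_nhds
  refine le_antisymm (ge_of_tendsto hlim ?_) zero_le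
  filter_upwards [self_mem_nhdsWithin] with ε (hε : 0 < ε)
  refine (measure_mono fun D hD => ?_).trans (measure_exists_isQuasimode_le hA hν E hε)
  obtain ⟨v, hv⟩ := (not_not.1 hD).exists_hasEigenvector
  exact ⟨v, hv.2, by rw [hv.apply_eq_smul, sub_self, norm_zero]; positivity⟩

/-- `l` and `m` are eigenvalues of `H` at two different positions of its spectrum, so that `l = m`
is allowed only for a multiple eigenvalue. -/
def IsEigenvaluePair (H : Matrix ι ι ℂ) (l m : ℝ) : Prop :=
  ∃ x y, Module.End.HasEigenvector (toEuclideanLin H) (l : ℂ) x ∧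
    Module.End.HasEigenvector (toEuclideanLin H) (m : ℂ) y ∧ inner ℂ x y = 0

lemma norm_sub_smul_le_of_hasEigenvector {H : Matrix ι ι ℂ} {l m E ε : ℝ}
    {x y : EuclideanSpace ℂ ι} (hx : Module.End.HasEigenvector (toEuclideanLin H) (l : ℂ) x)
    (hy : Module.End.HasEigenvector (toEuclideanLin H) (m : ℂ) y) (hxy : inner ℂ x y = 0)
    (hl : |l - E| ≤ ε) (hm : |m - E| ≤ ε) (a b : ℂ) :
    ‖toEuclideanLin H (a • x + b • y) - (E : ℂ) • (a • x + b • y)‖ ≤ ε * ‖a • x + b • y‖ := by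
  have hsq (s t : ℂ) : ‖s • x + t • y‖ ^ 2 = ‖s • x‖ ^ 2 + ‖t • y‖ ^ 2 := by
    simpa only [sq] using norm_add_sq_eq_norm_sq_add_norm_sq_of_inner_eq_zero (𝕜 := ℂ) _ _
      (by simp [inner_smul_left, inner_smul_right, hxy])
  have hshift : toEuclideanLin H (a • x + b • y) - (E : ℂ) • (a • x + b • y) =
      (((l - E : ℝ) : ℂ) * a) • x + (((m - E : ℝ) : ℂ) * b) • y := by
    rw [map_add, map_smul, map_smul, hx.apply_eq_smul, hy.apply_eq_smul]
    push_cast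
    module
  have hε : 0 ≤ ε := (abs_nonneg _).trans hl
  refine (sq_le_sq₀ (norm_nonneg _) (by positivity)).1 ?_
  rw [hshift, hsq, mul_pow, hsq, mul_add, mul_smul, mul_smul, norm_smul _ (a • x),
    norm_smul _ (b • y), Complex.norm_real, Complex.norm_real, mul_pow, mul_pow]
  gcongr <;> assumption

-- The two eigenvectors span a plane, which meets the hyperplane `v j = 0`.
lemma IsEigenvaluePair.exists_isQuasimode {H : Matrix ι ι ℂ} {l m E ε : ℝ}
    (h : IsEigenvaluePair H l m) (hl : |l - E| ≤ ε) (hm : |m - E| ≤ ε) (j : ι) :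
    ∃ v, IsQuasimode H E ε v ∧ v j = 0 := by
  obtain ⟨x, y, hx, hy, hxy⟩ := h
  have hquasi := norm_sub_smul_le_of_hasEigenvector hx hy hxy hl hm
  rcases eq_or_ne (x j) 0 with hxj | hxj
  · exact ⟨x, ⟨hx.2, by simpa using hquasi 1 0⟩, hxj⟩
  · refine ⟨y j • x + -x j • y, ⟨fun hv => ?_, hquasi _ _⟩, ?_⟩
    · have hinner := congrArg (inner ℂ y) hv
      simp [inner_smul_right, inner_eq_zero_symm.1 hxy, hxj, hy.2] at hinner
    · simp [mul_comm]

lemma measure_isEigenvaluePair_near_le (hA : A.IsHermitian) (hν : ∀ i, ν i ≤ ρ • volume) (E : ℝ)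
    {ε : ℝ} (hε : 0 < ε) :
    Measure.pi ν {D | ∃ l m, IsEigenvaluePair (addDiagonal A D) l m ∧ |l - E| ≤ ε ∧ |m - E| ≤ ε} ≤
      (Fintype.card ι * (ENNReal.ofReal (4 * Real.pi * ε) * ρ)) ^ 2 := by
  rcases isEmpty_or_nonempty ι with hι | hι
  · refine (measure_mono_null ?_ measure_empty).trans_le zero_le
    rintro D ⟨l, m, ⟨x, y, hx, -⟩, -⟩
    exact hx.2 (Subsingleton.elim _ _)
  refine measure_pi_le_sq_of_one_le_sum_update
    (measurable_ofReal_im_greenFunction_addDiagonal A E ε)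
    (fun j D => lintegral_im_greenFunction_addDiagonal_update_le hA E hε (hν j) j D) ?_
  rintro D ⟨l, m, hlm, hl, hm⟩ j t
  obtain ⟨v, ⟨hv, hvE⟩, hvj⟩ := hlm.exists_isQuasimode hl hm j
  rw [← toEuclideanLin_addDiagonal_update A D t hvj] at hvE
  exact IsQuasimode.one_le_sum_im_greenFunction (isHermitian_addDiagonal hA _) hε ⟨hv, hvE⟩

lemma exists_finset_abs_sub_intCast_mul_le {R η : ℝ} (hη : 0 < η) (hηR : η ≤ R) :
    ∃ K : Finset ℤ, K.card ≤ 4 * R / η ∧ ∀ l, |l| ≤ R → ∃ k ∈ K, |l - k * η| ≤ η := by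
  have hRη : 1 ≤ R / η := (one_le_div hη).2 hηR
  refine ⟨Finset.Icc ⌊-(R / η)⌋ ⌊R / η⌋, ?_, fun l hl => ⟨⌊l / η⌋, ?_, ?_⟩⟩
  · have hle : ⌊-(R / η)⌋ ≤ ⌊R / η⌋ := Int.floor_mono (by linarith)
    rw [Int.card_Icc, ← Int.cast_natCast, Int.toNat_of_nonneg (by lia)]
    push_cast
    linarith [Int.floor_le (R / η), Int.lt_floor_add_one (-(R / η)), mul_div_assoc 4 R η]
  · have hlη : |l / η| ≤ R / η := by
      rw [abs_div, abs_of_pos hη]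
      gcongr
    exact Finset.mem_Icc.2 ⟨Int.floor_mono (abs_le.1 hlη).1, Int.floor_mono (abs_le.1 hlη).2⟩
  · have hlow : ⌊l / η⌋ * η ≤ l := (le_div_iff₀ hη).1 (Int.floor_le _)
    have hupp : l < (⌊l / η⌋ + 1) * η := (div_lt_iff₀ hη).1 (Int.lt_floor_add_one _)
    exact abs_le.2 ⟨by linarith, by linarith⟩

lemma measure_isEigenvaluePair_close_le (hA : A.IsHermitian) (hν : ∀ i, ν i ≤ ρ • volume)
    {R η : ℝ} (hη : 0 < η) (hηR : η ≤ R) :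
    Measure.pi ν {D | ∃ l m, IsEigenvaluePair (addDiagonal A D) l m ∧ |l| ≤ R ∧ |l - m| ≤ η} ≤
      ENNReal.ofReal (2560 * R * η) * (Fintype.card ι * ρ) ^ 2 := by
  obtain ⟨K, hKcard, hK⟩ := exists_finset_abs_sub_intCast_mul_le hη hηR
  have hcover : {D | ∃ l m, IsEigenvaluePair (addDiagonal A D) l m ∧ |l| ≤ R ∧ |l - m| ≤ η} ⊆
      ⋃ k ∈ K, {D | ∃ l m, IsEigenvaluePair (addDiagonal A D) l m ∧
        |l - k * η| ≤ 2 * η ∧ |m - k * η| ≤ 2 * η} := by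
    rintro D ⟨l, m, hlm, hl, hd⟩
    obtain ⟨k, hkK, hk⟩ := hK l hl
    refine Set.mem_iUnion₂.2 ⟨k, hkK, l, m, hlm, by linarith, ?_⟩
    linarith [abs_sub_le m l (k * η), abs_sub_comm m l]
  have hconst : K.card * (4 * Real.pi * (2 * η)) ^ 2 ≤ 2560 * R * η :=
    calc K.card * (4 * Real.pi * (2 * η)) ^ 2 ≤ 4 * R / η * (4 * Real.pi * (2 * η)) ^ 2 := by
          gcongr
      _ = 256 * R * η * Real.pi ^ 2 := by field_simp; ring
      _ ≤ 256 * R * η * 10 := by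
          have hR : 0 < R := hη.trans_le hηR
          gcongr
          nlinarith [Real.pi_lt_d2, Real.pi_pos]
      _ = 2560 * R * η := by ring
  calc _ ≤ ∑ k ∈ K, _ := (measure_mono hcover).trans (measure_biUnion_finset_le _ _)
    _ ≤ K.card • (Fintype.card ι * (ENNReal.ofReal (4 * Real.pi * (2 * η)) * ρ)) ^ 2 :=
        Finset.sum_le_card_nsmul _ _ _ fun k _ =>
          measure_isEigenvaluePair_near_le hA hν (k * η) (by positivity)
    _ = ENNReal.ofReal (K.card * (4 * Real.pi * (2 * η)) ^ 2) * (Fintype.card ι * ρ) ^ 2 := by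
        rw [ENNReal.ofReal_mul (Nat.cast_nonneg _), ENNReal.ofReal_pow (by positivity),
          ENNReal.ofReal_natCast, nsmul_eq_mul]
        ring
    _ ≤ ENNReal.ofReal (2560 * R * η) * (Fintype.card ι * ρ) ^ 2 := by
        gcongr

end LevelStatistics

section RealMatrices

open scoped Matrix.Norms.L2Operator

variable {M W : Matrix ι ι ℝ} {lam : ι → ℝ}

lemma abs_eigenvalue_le_norm (hW : Wᵀ * W = 1) (hM : M = W * diagonal lam * Wᵀ) (i : ι) :
    |lam i| ≤ ‖M‖ := by
  have hWu : W ∈ unitary (Matrix ι ι ℝ) := by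
    rw [← Matrix.unitaryGroup, mem_unitaryGroup_iff', star_eq_conjTranspose]
    simpa using hW
  have hdiag : ‖M‖ = ‖lam‖ := by
    rw [hM, ← conjTranspose_eq_transpose_of_trivial, ← star_eq_conjTranspose,
      CStarRing.norm_mul_mem_unitary _ (Unitary.star_mem hWu), CStarRing.norm_mem_unitary_mul _ hWu,
      l2_opNorm_diagonal]
  rw [hdiag]
  exact norm_le_pi_norm lam i

lemma hasEigenvector_map_ofReal_col (hW : Wᵀ * W = 1) (hM : M = W * diagonal lam * Wᵀ) (i : ι) :
    Module.End.HasEigenvector (toEuclideanLin (M.map Complex.ofReal)) (lam i : ℂ)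
      (WithLp.toLp 2 fun k => (W k i : ℂ)) := by
  have hcol : M *ᵥ (fun k => W k i) = lam i • fun k => W k i := by
    have hMW : M * W = W * diagonal lam := by rw [hM, Matrix.mul_assoc, hW, Matrix.mul_one]
    ext k
    have hk := congrFun (congrFun hMW k) i
    rwa [mul_diagonal, mul_comm] at hk
  refine Module.End.hasEigenvector_iff.2 ⟨Module.End.mem_eigenspace_iff.2 ?_, fun hzero => ?_⟩
  · ext k
    have hk := congrArg Complex.ofReal (congrFun hcol k)
    simpa [toLpLin_apply, mulVec, dotProduct] using hk
  · have hzero' (k : ι) : W k i = 0 := by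
      simpa using congrArg (fun v : EuclideanSpace ℂ ι => v k) hzero
    simpa [Matrix.mul_apply, hzero'] using congrFun (congrFun hW i) i

lemma isEigenvaluePair_map_ofReal (hW : Wᵀ * W = 1) (hM : M = W * diagonal lam * Wᵀ) {i j : ι}
    (hij : i ≠ j) : IsEigenvaluePair (M.map Complex.ofReal) (lam i) (lam j) := by
  refine ⟨_, _, hasEigenvector_map_ofReal_col hW hM i, hasEigenvector_map_ofReal_col hW hM j, ?_⟩
  have hentry : ∑ k, W k i * W k j = 0 := by
    simpa [Matrix.mul_apply, hij] using congrFun (congrFun hW i) j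
  simpa [PiLp.inner_apply, mul_comm] using congrArg Complex.ofReal hentry

lemma le_abs_sub_div_abs_of_not_isEigenvaluePair {R g : ℝ} (hg : 0 ≤ g) (hR : ‖M‖ ≤ R)
    (hzero : ¬Module.End.HasEigenvalue (toEuclideanLin (M.map Complex.ofReal)) 0)
    (hgap : ¬∃ l m, IsEigenvaluePair (M.map Complex.ofReal) l m ∧ |l| ≤ R ∧ |l - m| ≤ R * g)
    (hW : Wᵀ * W = 1) (hM : M = W * diagonal lam * Wᵀ) {i j : ι} (hij : i ≠ j) :
    g ≤ |lam i - lam j| / |lam j| := by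
  have hne : lam j ≠ 0 := fun h => hzero <| by
    simpa [h] using
      Module.End.hasEigenvalue_of_hasEigenvector (hasEigenvector_map_ofReal_col hW hM j)
  have hbound (k : ι) : |lam k| ≤ R := (abs_eigenvalue_le_norm hW hM k).trans hR
  have hlt : R * g < |lam i - lam j| := by
    by_contra! hle
    exact hgap ⟨_, _, isEigenvaluePair_map_ofReal hW hM hij, hbound i, hle⟩
  rw [le_div_iff₀ (abs_pos.2 hne)]
  calc g * |lam j| ≤ g * R := by
        gcongr
        exact hbound j
    _ = R * g := mul_comm _ _
    _ ≤ |lam i - lam j| := hlt.le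

lemma specNorm_eq_norm {n d : ℕ} (M : Matrix (Fin n) (Fin d) ℝ) : specNorm M = ‖M‖ := by
  rw [l2_opNorm_def, ← ContinuousLinearMap.sSup_unitClosedBall_eq_norm, specNorm]
  have hl2 {k : ℕ} (v : Fin k → ℝ) : l2norm v = ‖WithLp.toLp 2 v‖ := by
    simp [l2norm, EuclideanSpace.norm_eq]
  congr 1
  ext c
  constructor
  · rintro ⟨v, hv, rfl⟩
    exact ⟨WithLp.toLp 2 v, by simpa [hl2] using hv, (hl2 _).symm⟩
  · rintro ⟨v, hv, rfl⟩
    exact ⟨v.ofLp, by simpa [hl2] using hv, (hl2 _).symm⟩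

lemma norm_add_diagonal_le {D : ι → ℝ} (hD : ∀ i, |D i| ≤ ‖M‖) : ‖M + diagonal D‖ ≤ 2 * ‖M‖ := by
  calc ‖M + diagonal D‖ ≤ ‖M‖ + ‖diagonal D‖ := norm_add_le _ _
    _ ≤ ‖M‖ + ‖M‖ := by
        rw [l2_opNorm_diagonal]
        gcongr
        exact (pi_norm_le_iff_of_nonneg (norm_nonneg _)).2 hD
    _ = 2 * ‖M‖ := (two_mul _).symm

end RealMatrices

section GapTheorem

open scoped Matrix.Norms.L2Operator

lemma le_of_le_inv_smul_volume {μ : Measure ℝ} [IsProbabilityMeasure μ] {σ S : ℝ} (hσ : 0 < σ)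
    (hμ : μ ≤ (ENNReal.ofReal (2 * σ))⁻¹ • volume) (hS : ∀ᵐ t ∂μ, |t| ≤ S) : σ ≤ S := by
  have hmass : 1 ≤ (ENNReal.ofReal (2 * σ))⁻¹ * ENNReal.ofReal (2 * S) :=
    calc 1 = μ (Set.Icc (-S) S) := by
          simp_rw [abs_le, ← Set.mem_Icc] at hS
          rw [(prob_compl_eq_zero_iff measurableSet_Icc).1 hS]
      _ ≤ ((ENNReal.ofReal (2 * σ))⁻¹ • volume) (Set.Icc (-S) S) := hμ _
      _ = (ENNReal.ofReal (2 * σ))⁻¹ * ENNReal.ofReal (2 * S) := by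
          rw [Measure.smul_apply, Real.volume_Icc, smul_eq_mul, sub_neg_eq_add, ← two_mul]
  have hofReal : ENNReal.ofReal (2 * σ) ≤ ENNReal.ofReal (2 * S) := by
    rwa [mul_comm, ← div_eq_mul_inv, ENNReal.le_div_iff_mul_le (.inl (by simp [hσ]))
      (.inl ENNReal.ofReal_ne_top), one_mul] at hmass
  rcases ENNReal.ofReal_le_ofReal_iff'.1 hofReal with h | h <;> linarith

variable {n : ℕ} {A : Matrix (Fin n) (Fin n) ℝ} {ν : Fin n → Measure ℝ}
  [∀ i, IsProbabilityMeasure (ν i)]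

lemma measure_isEigenvaluePair_close_le_ofReal [NeZero n] (hA : A.IsSymm) {δ σ S : ℝ}
    (hδ : δ ∈ Set.Ioo (0 : ℝ) 1) (hσ : 0 < σ) (hσS : σ ≤ S)
    (hν : ∀ i, ν i ≤ (ENNReal.ofReal (2 * σ))⁻¹ • volume) :
    Measure.pi ν {D | ∃ l m, IsEigenvaluePair ((A + diagonal D).map Complex.ofReal) l m ∧
      |l| ≤ 2 * S ∧ |l - m| ≤ 2 * S * (δ / (2560 * (n : ℝ) ^ 2) * (σ ^ 2 / S ^ 2))} ≤
      ENNReal.ofReal δ := by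
  obtain ⟨hδ0, hδ1⟩ := hδ
  have hS : 0 < S := hσ.trans_le hσS
  have hn : 1 ≤ (n : ℝ) := by exact_mod_cast NeZero.one_le
  set g := δ / (2560 * (n : ℝ) ^ 2) * (σ ^ 2 / S ^ 2) with hg
  have hg0 : 0 < g := by positivity
  have hg1 : g ≤ 1 := mul_le_one₀ ((div_le_one (by positivity)).2 (by nlinarith)) (by positivity)
    ((div_le_one (by positivity)).2 (by gcongr))
  have hclose := measure_isEigenvaluePair_close_le (isHermitian_map_ofReal hA) hν
    (mul_pos (by positivity : 0 < 2 * S) hg0) (mul_le_of_le_one_right (by positivity) hg1)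
  simp only [addDiagonal_map_ofReal] at hclose
  refine hclose.trans_eq ?_
  rw [Fintype.card_fin, ← ENNReal.ofReal_inv_of_pos (by positivity), ← ENNReal.ofReal_natCast,
    ← ENNReal.ofReal_mul (by positivity), ← ENNReal.ofReal_pow (by positivity),
    ← ENNReal.ofReal_mul (by positivity), hg]
  congr 1
  field_simp

theorem diagonal_perturbation_gap_general (hA : A.IsSymm) {δ σ : ℝ}
    (hδ : δ ∈ Set.Ioo (0 : ℝ) 1) (hσ : 0 < σ)
    (hν : ∀ i, ν i ≤ (ENNReal.ofReal (2 * σ))⁻¹ • volume)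
    (hsupp : ∀ i, ∀ᵐ t ∂ν i, |t| ≤ specNorm A) :
    ENNReal.ofReal (1 - δ) ≤ Measure.pi ν {D |
      ∀ (W : Matrix (Fin n) (Fin n) ℝ) (lam : Fin n → ℝ), Wᵀ * W = 1 →
        A + diagonal D = W * diagonal lam * Wᵀ → ∀ i j, i ≠ j →
          δ / (2560 * (n : ℝ) ^ 2) * (σ ^ 2 / specNorm A ^ 2) ≤ |lam i - lam j| / |lam j|} := by
  rcases Nat.eq_zero_or_pos n with rfl | hn
  · simpa [Subsingleton.elim] using hδ.1.le
  have : NeZero n := ⟨hn.ne'⟩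
  have hσS : σ ≤ specNorm A := le_of_le_inv_smul_volume hσ (hν 0) (hsupp 0)
  have hbox : ∀ᵐ D ∂Measure.pi ν, ∀ i, |D i| ≤ specNorm A := ae_all_iff.2 fun i =>
    (measurePreserving_eval ν i).quasiMeasurePreserving.ae (hsupp i)
  -- At an eigenvalue `lam j = 0` the quotient `|lam i - lam j| / |lam j|` takes the value `0`.
  have hzero := ae_not_hasEigenvalue_addDiagonal (isHermitian_map_ofReal hA) (by simp [hσ]) hν 0
  have hclose := measure_isEigenvaluePair_close_le_ofReal hA hδ hσ hσS hν
  simp only [addDiagonal_map_ofReal, Complex.ofReal_zero] at hzero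
  rw [ENNReal.ofReal_sub _ hδ.1.le, ENNReal.ofReal_one, tsub_le_iff_right,
    ← measure_univ (μ := Measure.pi ν)]
  refine (measure_univ_le_add_compl _).trans <|
    add_le_add_right ((measure_mono_ae ?_).trans hclose) _
  filter_upwards [hbox, hzero] with D hD hD0 hbad
  by_contra hgap
  refine hbad fun W lam hW hM i j hij =>
    le_abs_sub_div_abs_of_not_isEigenvaluePair (by have := hδ.1; positivity) ?_ hD0 hgap hW hM hij
  rw [specNorm_eq_norm] at hD ⊢
  exact norm_add_diagonal_le hD

end GapTheorem

lemma isProbabilityMeasure_inv_smul_restrict_Icc {Δ : ℝ} (hΔ : 0 < Δ) :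
    IsProbabilityMeasure
      ((ENNReal.ofReal (2 * Δ))⁻¹ • volume.restrict (Set.Icc (-Δ) Δ) : Measure ℝ) := by
  constructor
  rw [Measure.smul_apply, Measure.restrict_apply_univ, Real.volume_Icc, sub_neg_eq_add, ← two_mul,
    smul_eq_mul, ENNReal.inv_mul_cancel (by simpa using hΔ) ENNReal.ofReal_ne_top]

/-- Lemma `lem:diagonal-perturb-gaps`: there is a universal constant `C`
such that, for a symmetric `A ∈ ℝ^{n×n}` and a random diagonal `D` with i.i.d.
`Uniform[-Δ, Δ]` entries (`0 < Δ ≤ ‖A‖₂`), with probability `≥ 1 - δ` every pair of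
consecutive eigenvalues (sorted decreasingly) of `Ã = A + D` satisfies
`|λ_i - λ_{i+1}| / |λ_{i+1}| ≥ (δ/(C n²))·(Δ²/‖A‖₂²)`.  The eigenvalues are supplied
through an arbitrary orthogonal eigendecomposition of `Ã` with decreasing eigenvalues. -/
theorem diagonal_perturbation_gap :
    ∃ C : ℝ, 0 < C ∧
      ∀ (n : ℕ) (A : Matrix (Fin n) (Fin n) ℝ), A.IsSymm →
      ∀ δ Δ : ℝ, δ ∈ Set.Ioo (0 : ℝ) 1 → 0 < Δ → Δ ≤ specNorm A →
        ENNReal.ofReal (1 - δ) ≤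
          (Measure.pi fun _ : Fin n =>
              (ENNReal.ofReal (2 * Δ))⁻¹ • volume.restrict (Set.Icc (-Δ) Δ))
            {dvec : Fin n → ℝ |
              ∀ (W : Matrix (Fin n) (Fin n) ℝ) (lam : Fin n → ℝ),
                Wᵀ * W = 1 → (∀ i j : Fin n, i ≤ j → lam j ≤ lam i) →
                A + Matrix.diagonal dvec = W * Matrix.diagonal lam * Wᵀ →
                ∀ (i : Fin n) (h : (i : ℕ) + 1 < n),
                  δ / (C * (n : ℝ) ^ 2) * (Δ ^ 2 / specNorm A ^ 2) ≤
                    |lam i - lam ⟨(i : ℕ) + 1, h⟩| / |lam ⟨(i : ℕ) + 1, h⟩|} := by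
  refine ⟨2560, by norm_num, fun n A hA δ Δ hδ hΔ hΔA => ?_⟩
  have := isProbabilityMeasure_inv_smul_restrict_Icc hΔ
  refine (diagonal_perturbation_gap_general hA hδ hΔ (fun _ => ?_) fun _ => ?_).trans
    (measure_mono fun D hD W lam hW _ hM i h => hD W lam hW hM i ⟨i + 1, h⟩ ?_)
  · gcongr
    exact Measure.restrict_le_self
  · refine Measure.ae_smul_measure ?_ _
    filter_upwards [ae_restrict_mem measurableSet_Icc] with t ht using (abs_le.2 ht).trans hΔA
  · exact (Fin.lt_def.2 (Nat.lt_succ_self i)).ne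

end
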